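/- Let a, b ∈ C_c^∞(ℝ²), write them in polar coordinates (r,θ) with θ ∈ (0,π) on the upper half-plane, and set a_r = (a(r,π) + a(r,0))/2. Then |(1/π) ∫₀^∞ ∫₀^π (1/r)(a − a_r) ∂_θ b dθ dr| ≤ C ‖∇a‖_{L²(ℝ²₊)} ‖∇b‖_{L²(ℝ²₊)} for a universal constant C. -/

import Mathlib

/-!
STATEMENT 13.  For a, b ∈ C_c^∞(ℝ²), in polar coordinates on the upper
half-plane, with a_r = (a(r,π) + a(r,0))/2,
|(1/π) ∫₀^∞ ∫₀^π (1/r)(a − a_r) ∂_θ b dθ dr| ≤ C ‖∇a‖_{L²(ℝ²₊)} ‖∇b‖_{L²(ℝ²₊)}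
for a universal constant C.
-/

noncomputable section
open MeasureTheory Real Filter Set ENNReal

/-- The open upper half-plane `ℝ²₊`. -/
def UHP : Set (ℝ × ℝ) := {p : ℝ × ℝ | 0 < p.2}

/-- First partial derivative. -/
def pd1 (f : ℝ × ℝ → ℝ) (p : ℝ × ℝ) : ℝ := fderiv ℝ f p (1, 0)

/-- Second partial derivative. -/
def pd2 (f : ℝ × ℝ → ℝ) (p : ℝ × ℝ) : ℝ := fderiv ℝ f p (0, 1)

/-- The angular derivative `∂_θ` of `b` at the point with polar coordinates `(r, θ)`. -/
def angDeriv (b : ℝ × ℝ → ℝ) (r θ : ℝ) : ℝ :=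
  deriv (fun t => b (r * Real.cos t, r * Real.sin t)) θ

/-!
On the half-circle of radius `r`, the distance from `a` to the mean `a_r` of its two end values is
at most half the variation `∫₀^π |∂_θ a| dθ`: travel to each end and average. The angular integral
is thus bounded by half the product of the variations of `a` and `b`. By Cauchy–Schwarz each
variation is at most `√π √(r E(r))`, where `E(r) = ∫₀^π |∇u|² r dθ` for `u = a, b`. The factor `r`
cancels the weight `1/r`, and a second Cauchy–Schwarz, now in `r`, gives the product of the
Dirichlet norms because `∫₀^∞ E(r) dr` is the Dirichlet energy of the half-plane. The resulting
constant is `1/2`.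
-/

section CauchySchwarz

variable {α : Type*} [MeasurableSpace α] {μ : Measure α} {F G : α → ℝ}

lemma memLp_two_sqrt (hF : Integrable F μ) : MemLp (fun x => √(F x)) 2 μ := by
  rw [memLp_two_iff_integrable_sq
    (continuous_sqrt.comp_aestronglyMeasurable hF.aestronglyMeasurable)]
  simpa only [sq_sqrt'] using hF.pos_part

lemma integrable_sqrt_mul_sqrt (hF : Integrable F μ) (hG : Integrable G μ) :
    Integrable (fun x => √(F x) * √(G x)) μ :=
  (memLp_two_sqrt hF).integrable_mul (memLp_two_sqrt hG)

lemma integral_sqrt_mul_sqrt_le (hF : 0 ≤ᵐ[μ] F) (hG : 0 ≤ᵐ[μ] G)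
    (hFi : Integrable F μ) (hGi : Integrable G μ) :
    ∫ x, √(F x) * √(G x) ∂μ ≤ √(∫ x, F x ∂μ) * √(∫ x, G x ∂μ) := by
  have integral_rpow_sqrt {H : α → ℝ} (hH : 0 ≤ᵐ[μ] H) :
      ∫ x, √(H x) ^ (2 : ℝ) ∂μ = ∫ x, H x ∂μ := by
    refine integral_congr_ae ?_
    filter_upwards [hH] with x hx
    rw [Real.rpow_two, sq_sqrt hx]
  have holder := integral_mul_le_Lp_mul_Lq_of_nonneg (μ := μ) HolderConjugate.two_two
    (ae_of_all _ fun x => sqrt_nonneg (F x)) (ae_of_all _ fun x => sqrt_nonneg (G x))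
    (by simpa using memLp_two_sqrt hFi) (by simpa using memLp_two_sqrt hGi)
  rwa [integral_rpow_sqrt hF, integral_rpow_sqrt hG, ← sqrt_eq_rpow, ← sqrt_eq_rpow] at holder

end CauchySchwarz

lemma dist_midpoint_le_half_integral_norm_deriv {E : Type*} [NormedAddCommGroup E]
    [NormedSpace ℝ E] [CompleteSpace E] {g g' : ℝ → E} {α β x : ℝ} (hx : x ∈ Icc α β)
    (hg : ContinuousOn g (Icc α β)) (hderiv : ∀ t ∈ Ioo α β, HasDerivAt g (g' t) t)
    (hint : IntegrableOn g' (Ioo α β)) :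
    dist (g x) (midpoint ℝ (g α) (g β)) ≤ (∫ t in Ioo α β, ‖g' t‖) / 2 := by
  have hαβ : IntervalIntegrable g' volume α β :=
    (intervalIntegrable_iff_integrableOn_Ioo_of_le (hx.1.trans hx.2)).2 hint
  have hαx : IntervalIntegrable g' volume α x :=
    hαβ.mono_set (by rw [uIcc_of_le hx.1, uIcc_of_le (hx.1.trans hx.2)]; gcongr; exact hx.2)
  have hxβ : IntervalIntegrable g' volume x β := hαx.symm.trans hαβ
  have dist_left : dist (g x) (g α) ≤ ∫ t in α..x, ‖g' t‖ := by
    rw [dist_eq_norm, ← intervalIntegral.integral_eq_sub_of_hasDerivAt_of_le hx.1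
      (hg.mono (Icc_subset_Icc_right hx.2))
      (fun t ht => hderiv t (Ioo_subset_Ioo_right hx.2 ht)) hαx]
    exact intervalIntegral.norm_integral_le_integral_norm hx.1
  have dist_right : dist (g x) (g β) ≤ ∫ t in x..β, ‖g' t‖ := by
    rw [dist_comm, dist_eq_norm, ← intervalIntegral.integral_eq_sub_of_hasDerivAt_of_le hx.2
      (hg.mono (Icc_subset_Icc_left hx.1))
      (fun t ht => hderiv t (Ioo_subset_Ioo_left hx.1 ht)) hxβ]
    exact intervalIntegral.norm_integral_le_integral_norm hx.2
  calc dist (g x) (midpoint ℝ (g α) (g β))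
      ≤ (dist (g x) (g α) + dist (g x) (g β)) / 2 := by
        simpa using dist_midpoint_midpoint_le (g x) (g x) (g α) (g β)
    _ ≤ ((∫ t in α..x, ‖g' t‖) + ∫ t in x..β, ‖g' t‖) / 2 := by gcongr
    _ = (∫ t in Ioo α β, ‖g' t‖) / 2 := by
        rw [intervalIntegral.integral_add_adjacent_intervals hαx.norm hxβ.norm,
          intervalIntegral.integral_of_le (hx.1.trans hx.2), integral_Ioc_eq_integral_Ioo]

lemma isOpen_UHP : IsOpen UHP := isOpen_lt continuous_const continuous_snd

lemma polar_mem_UHP {r θ : ℝ} (hr : 0 < r) (hθ : θ ∈ Ioo 0 π) : (r * cos θ, r * sin θ) ∈ UHP :=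
  mul_pos hr (sin_pos_of_mem_Ioo hθ)

section PolarUHP

lemma Ioi_prod_Ioo_subset_polarCoord_target :
    Ioi (0 : ℝ) ×ˢ Ioo 0 π ⊆ polarCoord.target :=
  prod_mono_right (Ioo_subset_Ioo_left (neg_nonpos.2 pi_pos.le))

lemma polarCoord_symm_image_Ioi_prod_Ioo :
    polarCoord.symm '' (Ioi (0 : ℝ) ×ˢ Ioo 0 π) = UHP := by
  refine Subset.antisymm ?_ fun p hp => ?_
  · rintro _ ⟨⟨r, θ⟩, ⟨hr, hθ⟩, rfl⟩
    exact polar_mem_UHP hr hθ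
  · have hsource : p ∈ polarCoord.source := Or.inr (ne_of_gt hp)
    obtain ⟨hr, hθ⟩ := polarCoord.map_source hsource
    have hinv := polarCoord.left_inv hsource
    refine ⟨polarCoord p, ⟨hr, ?_, hθ.2⟩, hinv⟩
    have hsin : 0 < (polarCoord p).1 * sin (polarCoord p).2 := by
      have hp' : 0 < (polarCoord.symm (polarCoord p)).2 := hinv.symm ▸ hp
      exact hp'
    by_contra! hle
    exact absurd (pos_of_mul_pos_right hsin (le_of_lt hr))
      (sin_nonpos_of_nonpos_of_neg_pi_le hle hθ.1.le).not_gt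

variable {E : Type*} [NormedAddCommGroup E] [NormedSpace ℝ E] {F : ℝ × ℝ → E}

lemma integrableOn_polar_of_integrableOn_UHP (hF : IntegrableOn F UHP) :
    IntegrableOn (fun q : ℝ × ℝ => q.1 • F (q.1 * cos q.2, q.1 * sin q.2))
      (Ioi 0 ×ˢ Ioo 0 π) := by
  rw [← polarCoord_symm_image_Ioi_prod_Ioo,
    integrableOn_image_iff_integrableOn_abs_det_fderiv_smul volume
      (measurableSet_Ioi.prod measurableSet_Ioo)
      (fun q _ => (hasFDerivAt_polarCoord_symm q).hasFDerivWithinAt)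
      (polarCoord.symm.injOn.mono Ioi_prod_Ioo_subset_polarCoord_target)] at hF
  refine hF.congr_fun (fun q hq => ?_) (measurableSet_Ioi.prod measurableSet_Ioo)
  simp only [det_fderivPolarCoordSymm, abs_of_pos (mem_Ioi.1 hq.1), polarCoord_symm_apply]

lemma setIntegral_UHP_eq_integral_polar (hF : IntegrableOn F UHP) :
    ∫ p in UHP, F p = ∫ r in Ioi (0 : ℝ), ∫ θ in Ioo 0 π, r • F (r * cos θ, r * sin θ) := by
  have hmeas : MeasurableSet (Ioi (0 : ℝ) ×ˢ Ioo 0 π) := measurableSet_Ioi.prod measurableSet_Ioo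
  calc ∫ p in UHP, F p
      = ∫ q in Ioi (0 : ℝ) ×ˢ Ioo 0 π, |(fderivPolarCoordSymm q).det| • F (polarCoord.symm q) := by
        rw [← polarCoord_symm_image_Ioi_prod_Ioo,
          integral_image_eq_integral_abs_det_fderiv_smul volume hmeas
            (fun q _ => (hasFDerivAt_polarCoord_symm q).hasFDerivWithinAt)
            (polarCoord.symm.injOn.mono Ioi_prod_Ioo_subset_polarCoord_target)]
    _ = ∫ q in Ioi (0 : ℝ) ×ˢ Ioo 0 π, q.1 • F (q.1 * cos q.2, q.1 * sin q.2) := by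
        refine setIntegral_congr_fun hmeas fun q hq => ?_
        simp only [det_fderivPolarCoordSymm, abs_of_pos (mem_Ioi.1 hq.1), polarCoord_symm_apply]
    _ = ∫ r in Ioi (0 : ℝ), ∫ θ in Ioo 0 π, r • F (r * cos θ, r * sin θ) :=
        setIntegral_prod _ (integrableOn_polar_of_integrableOn_UHP hF)

end PolarUHP

/-- The squared length `|∇f|²` of the gradient, the density of the Dirichlet energy. -/
def gradSq (f : ℝ × ℝ → ℝ) (p : ℝ × ℝ) : ℝ := pd1 f p ^ 2 + pd2 f p ^ 2

/-- The density `|∇f|² r` of the Dirichlet energy with respect to `dr dθ`. -/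
def polarGradSq (f : ℝ × ℝ → ℝ) (r θ : ℝ) : ℝ := r * gradSq f (r * cos θ, r * sin θ)

/-- The Dirichlet energy carried by the upper half-circle of radius `r`, as a density in `r`. -/
def circleEnergy (f : ℝ × ℝ → ℝ) (r : ℝ) : ℝ := ∫ θ in Ioo 0 π, polarGradSq f r θ

lemma gradSq_nonneg (f : ℝ × ℝ → ℝ) (p : ℝ × ℝ) : 0 ≤ gradSq f p :=
  add_nonneg (sq_nonneg _) (sq_nonneg _)

section Energy

variable {f : ℝ × ℝ → ℝ} {r θ : ℝ}

lemma polarGradSq_nonneg (hr : 0 ≤ r) : 0 ≤ polarGradSq f r θ :=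
  mul_nonneg hr (gradSq_nonneg f _)

lemma circleEnergy_nonneg (hr : 0 ≤ r) : 0 ≤ circleEnergy f r :=
  integral_nonneg fun _ => polarGradSq_nonneg hr

lemma circleEnergy_ae_nonneg (f : ℝ × ℝ → ℝ) :
    0 ≤ᵐ[volume.restrict (Ioi 0)] circleEnergy f := by
  filter_upwards [ae_restrict_mem measurableSet_Ioi] with r hr using
    circleEnergy_nonneg (le_of_lt hr)

lemma integrable_gradSq (hf : ContDiff ℝ 1 f) (hc : HasCompactSupport f) :
    Integrable (gradSq f) := by
  have hcont : Continuous (gradSq f) := by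
    have : Continuous (fderiv ℝ f) := hf.continuous_fderiv one_ne_zero
    unfold gradSq pd1 pd2
    fun_prop
  have hsupp : HasCompactSupport (gradSq f) :=
    (hc.fderiv ℝ).comp_left (g := fun L : ℝ × ℝ →L[ℝ] ℝ => L (1, 0) ^ 2 + L (0, 1) ^ 2) (by simp)
  exact hcont.integrable_of_hasCompactSupport hsupp

lemma integrable_polarGradSq (hE : IntegrableOn (gradSq f) UHP) :
    Integrable (fun q : ℝ × ℝ => polarGradSq f q.1 q.2)
      ((volume.restrict (Ioi 0)).prod (volume.restrict (Ioo 0 π))) := by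
  rw [Measure.prod_restrict]
  exact integrableOn_polar_of_integrableOn_UHP hE

lemma integrableOn_circleEnergy (hE : IntegrableOn (gradSq f) UHP) :
    IntegrableOn (circleEnergy f) (Ioi 0) :=
  (integrable_polarGradSq hE).integral_prod_left

lemma ae_integrableOn_polarGradSq (hE : IntegrableOn (gradSq f) UHP) :
    ∀ᵐ r ∂volume.restrict (Ioi 0), IntegrableOn (polarGradSq f r) (Ioo 0 π) :=
  (integrable_polarGradSq hE).prod_right_ae

lemma integral_circleEnergy (hE : IntegrableOn (gradSq f) UHP) :
    ∫ r in Ioi 0, circleEnergy f r = ∫ p in UHP, gradSq f p :=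
  (setIntegral_UHP_eq_integral_polar hE).symm

end Energy

section AngularDerivative

variable {f : ℝ × ℝ → ℝ} {r θ : ℝ}

lemma hasDerivAt_comp_polar (hf : DifferentiableAt ℝ f (r * cos θ, r * sin θ)) :
    HasDerivAt (fun t => f (r * cos t, r * sin t))
      (fderiv ℝ f (r * cos θ, r * sin θ) (r * -sin θ, r * cos θ)) θ :=
  hf.hasFDerivAt.comp_hasDerivAt θ
    (((hasDerivAt_cos θ).const_mul r).prodMk ((hasDerivAt_sin θ).const_mul r))

lemma angDeriv_eq (hf : DifferentiableAt ℝ f (r * cos θ, r * sin θ)) :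
    angDeriv f r θ = r * (cos θ * pd2 f (r * cos θ, r * sin θ)
      - sin θ * pd1 f (r * cos θ, r * sin θ)) := by
  have hbasis : ((r * -sin θ, r * cos θ) : ℝ × ℝ)
      = (r * -sin θ) • (1, 0) + (r * cos θ) • (0, 1) := by
    simp
  rw [angDeriv, (hasDerivAt_comp_polar hf).deriv, hbasis, map_add, map_smul, map_smul, pd1, pd2,
    smul_eq_mul, smul_eq_mul]
  ring

lemma sq_angDeriv_le (hf : DifferentiableAt ℝ f (r * cos θ, r * sin θ)) :
    angDeriv f r θ ^ 2 ≤ r * polarGradSq f r θ := by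
  rw [angDeriv_eq hf, polarGradSq, gradSq]
  set u := pd1 f (r * cos θ, r * sin θ)
  set v := pd2 f (r * cos θ, r * sin θ)
  calc (r * (cos θ * v - sin θ * u)) ^ 2
      ≤ (r * (cos θ * v - sin θ * u)) ^ 2 + (r * (cos θ * u + sin θ * v)) ^ 2 :=
        le_add_of_nonneg_right (sq_nonneg _)
    _ = r * (r * (u ^ 2 + v ^ 2)) := by
        linear_combination r ^ 2 * (u ^ 2 + v ^ 2) * sin_sq_add_cos_sq θ

lemma differentiableAt_polar (hr : 0 < r) (hf : DifferentiableOn ℝ f UHP) (hθ : θ ∈ Ioo 0 π) :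
    DifferentiableAt ℝ f (r * cos θ, r * sin θ) :=
  hf.differentiableAt (isOpen_UHP.mem_nhds (polar_mem_UHP hr hθ))

lemma hasDerivAt_angDeriv (hr : 0 < r) (hf : DifferentiableOn ℝ f UHP) (hθ : θ ∈ Ioo 0 π) :
    HasDerivAt (fun t => f (r * cos t, r * sin t)) (angDeriv f r θ) θ :=
  (hasDerivAt_comp_polar (differentiableAt_polar hr hf hθ)).differentiableAt.hasDerivAt

-- The factor `√1` is kept as the second function in Cauchy–Schwarz on `(0, π)`.
lemma abs_angDeriv_le (hr : 0 < r) (hf : DifferentiableOn ℝ f UHP) (hθ : θ ∈ Ioo 0 π) :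
    |angDeriv f r θ| ≤ √(r * polarGradSq f r θ) * √1 := by
  rw [sqrt_one, mul_one]
  exact abs_le_sqrt (sq_angDeriv_le (differentiableAt_polar hr hf hθ))

lemma integrableOn_angDeriv (hr : 0 < r) (hf : DifferentiableOn ℝ f UHP)
    (hslice : IntegrableOn (polarGradSq f r) (Ioo 0 π)) :
    IntegrableOn (angDeriv f r) (Ioo 0 π) := by
  refine (integrable_sqrt_mul_sqrt (hslice.const_mul r) (integrable_const 1)).mono'
    (measurable_deriv _).aestronglyMeasurable ?_
  filter_upwards [ae_restrict_mem measurableSet_Ioo] with θ hθ using abs_angDeriv_le hr hf hθ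

lemma integral_abs_angDeriv_le (hr : 0 < r) (hf : DifferentiableOn ℝ f UHP)
    (hslice : IntegrableOn (polarGradSq f r) (Ioo 0 π)) :
    ∫ θ in Ioo 0 π, |angDeriv f r θ| ≤ √(r * circleEnergy f r) * √π := by
  have hnonneg : 0 ≤ᵐ[volume.restrict (Ioo 0 π)] fun θ => r * polarGradSq f r θ :=
    ae_of_all _ fun _ => mul_nonneg hr.le (polarGradSq_nonneg hr.le)
  have hone : 0 ≤ᵐ[volume.restrict (Ioo 0 π)] fun _ => (1 : ℝ) := ae_of_all _ fun _ => zero_le_one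
  calc ∫ θ in Ioo 0 π, |angDeriv f r θ|
      ≤ ∫ θ in Ioo 0 π, √(r * polarGradSq f r θ) * √1 :=
        setIntegral_mono_on (integrableOn_angDeriv hr hf hslice).abs
          (integrable_sqrt_mul_sqrt (hslice.const_mul r) (integrable_const 1))
          measurableSet_Ioo fun θ hθ => abs_angDeriv_le hr hf hθ
    _ ≤ √(∫ θ in Ioo 0 π, r * polarGradSq f r θ) * √(∫ _ in Ioo 0 π, (1 : ℝ)) :=
        integral_sqrt_mul_sqrt_le hnonneg hone (hslice.const_mul r) (integrable_const 1)
    _ = √(r * circleEnergy f r) * √π := by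
        rw [integral_const_mul, circleEnergy]
        simp [pi_pos.le]

lemma abs_sub_endpoint_mean_le (hr : 0 < r) (hf : DifferentiableOn ℝ f UHP)
    (hslice : IntegrableOn (polarGradSq f r) (Ioo 0 π))
    (hcont : ContinuousOn f {p | 0 ≤ p.2}) (hθ : θ ∈ Ioo 0 π) :
    |f (r * cos θ, r * sin θ) - (f (r, 0) + f (-r, 0)) / 2|
      ≤ (∫ t in Ioo 0 π, |angDeriv f r t|) / 2 := by
  have hcircle : ContinuousOn (fun t => f (r * cos t, r * sin t)) (Icc 0 π) :=
    hcont.comp (by fun_prop) fun t ht => mul_nonneg hr.le (sin_nonneg_of_mem_Icc ht)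
  have hdist := dist_midpoint_le_half_integral_norm_deriv (Ioo_subset_Icc_self hθ) hcircle
    (fun t ht => hasDerivAt_angDeriv hr hf ht) (integrableOn_angDeriv hr hf hslice)
  simpa [dist_eq_norm, midpoint_eq_smul_add, inv_mul_eq_div] using hdist

end AngularDerivative

lemma abs_integral_angular_pairing_le {a b : ℝ × ℝ → ℝ} {r : ℝ} (hr : 0 < r)
    (hac : ContinuousOn a {p | 0 ≤ p.2}) (ha : DifferentiableOn ℝ a UHP)
    (hb : DifferentiableOn ℝ b UHP) (haE : IntegrableOn (polarGradSq a r) (Ioo 0 π))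
    (hbE : IntegrableOn (polarGradSq b r) (Ioo 0 π)) :
    |∫ θ in Ioo 0 π, (1 / r) * ((a (r * cos θ, r * sin θ) - (a (r, 0) + a (-r, 0)) / 2)
        * angDeriv b r θ)|
      ≤ π / 2 * (√(circleEnergy a r) * √(circleEnergy b r)) := by
  set A := ∫ θ in Ioo 0 π, |angDeriv a r θ|
  set B := ∫ θ in Ioo 0 π, |angDeriv b r θ|
  have hA : A ≤ √(r * circleEnergy a r) * √π := integral_abs_angDeriv_le hr ha haE
  have hB : B ≤ √(r * circleEnergy b r) * √π := integral_abs_angDeriv_le hr hb hbE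
  have hB_nonneg : 0 ≤ B := integral_nonneg fun _ => abs_nonneg _
  calc |∫ θ in Ioo 0 π, (1 / r) * ((a (r * cos θ, r * sin θ) - (a (r, 0) + a (-r, 0)) / 2)
        * angDeriv b r θ)|
      ≤ ∫ θ in Ioo 0 π, (1 / r) * (A / 2 * |angDeriv b r θ|) := by
        rw [← norm_eq_abs]
        refine norm_integral_le_of_norm_le
          (((integrableOn_angDeriv hr hb hbE).abs.const_mul (A / 2)).const_mul (1 / r)) ?_
        filter_upwards [ae_restrict_mem measurableSet_Ioo] with θ hθ
        rw [norm_eq_abs, abs_mul, abs_mul, abs_of_pos (one_div_pos.2 hr)]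
        gcongr
        exact abs_sub_endpoint_mean_le hr ha haE hac hθ
    _ = 1 / (2 * r) * (A * B) := by
        rw [integral_const_mul, integral_const_mul]
        ring
    _ ≤ 1 / (2 * r) * ((√(r * circleEnergy a r) * √π) * (√(r * circleEnergy b r) * √π)) := by
        have hAB := mul_le_mul hA hB hB_nonneg (by positivity)
        gcongr
    _ = 1 / (2 * r) * (√r ^ 2 * √π ^ 2 * (√(circleEnergy a r) * √(circleEnergy b r))) := by
        rw [sqrt_mul hr.le, sqrt_mul hr.le]
        ring
    _ = π / 2 * (√(circleEnergy a r) * √(circleEnergy b r)) := by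
        rw [sq_sqrt hr.le, sq_sqrt pi_pos.le]
        field_simp

theorem polar_symmetrized_estimate_general {a b : ℝ × ℝ → ℝ}
    (hac : ContinuousOn a {p | 0 ≤ p.2}) (ha : DifferentiableOn ℝ a UHP)
    (haE : IntegrableOn (gradSq a) UHP)
    (hb : DifferentiableOn ℝ b UHP) (hbE : IntegrableOn (gradSq b) UHP) :
    |(1 / π) * ∫ r in Ioi (0 : ℝ), ∫ θ in Ioo (0 : ℝ) π,
        (1 / r) * ((a (r * cos θ, r * sin θ) - (a (r, 0) + a (-r, 0)) / 2) * angDeriv b r θ)|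
      ≤ 1 / 2 * √(∫ p in UHP, gradSq a p) * √(∫ p in UHP, gradSq b p) := by
  have haI := integrableOn_circleEnergy haE
  have hbI := integrableOn_circleEnergy hbE
  rw [abs_mul, abs_of_pos (one_div_pos.2 pi_pos), ← integral_circleEnergy haE,
    ← integral_circleEnergy hbE]
  calc (1 / π) * |∫ r in Ioi (0 : ℝ), ∫ θ in Ioo (0 : ℝ) π,
        (1 / r) * ((a (r * cos θ, r * sin θ) - (a (r, 0) + a (-r, 0)) / 2) * angDeriv b r θ)|
      ≤ (1 / π) * ∫ r in Ioi 0, π / 2 * (√(circleEnergy a r) * √(circleEnergy b r)) := by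
        gcongr
        rw [← norm_eq_abs]
        refine norm_integral_le_of_norm_le ((integrable_sqrt_mul_sqrt haI hbI).const_mul (π / 2)) ?_
        filter_upwards [ae_restrict_mem measurableSet_Ioi, ae_integrableOn_polarGradSq haE,
          ae_integrableOn_polarGradSq hbE] with r hr haS hbS
        exact abs_integral_angular_pairing_le hr hac ha hb haS hbS
    _ = 1 / 2 * ∫ r in Ioi 0, √(circleEnergy a r) * √(circleEnergy b r) := by
        rw [integral_const_mul]
        field_simp
    _ ≤ 1 / 2 * (√(∫ r in Ioi 0, circleEnergy a r) * √(∫ r in Ioi 0, circleEnergy b r)) := by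
        gcongr
        exact integral_sqrt_mul_sqrt_le (circleEnergy_ae_nonneg a) (circleEnergy_ae_nonneg b)
          haI hbI
    _ = _ := (mul_assoc _ _ _).symm

/-- **The symmetrized part of the boundary representation is controlled by
`‖∇a‖_{L²} ‖∇b‖_{L²}`.** -/
theorem polar_symmetrized_estimate :
    ∃ C : ℝ, 0 < C ∧
      ∀ a b : ℝ × ℝ → ℝ,
        ContDiff ℝ (⊤ : ℕ∞) a → HasCompactSupport a →
        ContDiff ℝ (⊤ : ℕ∞) b → HasCompactSupport b →
        |(1 / π) * ∫ r in Set.Ioi (0 : ℝ), ∫ θ in Set.Ioo (0 : ℝ) π,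
            (1 / r) * ((a (r * Real.cos θ, r * Real.sin θ) - (a (r, 0) + a (-r, 0)) / 2)
              * angDeriv b r θ)|
          ≤ C * Real.sqrt (∫ p in UHP, ((pd1 a p) ^ 2 + (pd2 a p) ^ 2))
              * Real.sqrt (∫ p in UHP, ((pd1 b p) ^ 2 + (pd2 b p) ^ 2)) :=
  ⟨1 / 2, one_half_pos, fun _ _ ha hac hb hbc =>
    polar_symmetrized_estimate_general ha.continuous.continuousOn
      (ha.differentiable (by simp)).differentiableOn
      (integrable_gradSq (ha.of_le (by exact_mod_cast le_top)) hac).integrableOn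
      (hb.differentiable (by simp)).differentiableOn
      (integrable_gradSq (hb.of_le (by exact_mod_cast le_top)) hbc).integrableOn⟩
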